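/- arXiv:math/0104131 — 3 statements merged into one kernel-verified Lean document; each statement's English description precedes it below -/
import Mathlib

section
/- Let m be a positive integer and let x, u : ℕ → ℚ be functions satisfying u(r)² = x(r) for every odd positive integer r. Then I_{2m}(y) = I_{2m}(v) + I_m(w), where y(r) := 0 for odd r and y(r) := x(r/2) for even r; v(r) := u(r) for odd r and v(r) := 0 for even r; and w(r) := 0 for odd r and w(r) := x(r) for even r. -/
open Finset

/-- Cycle index of the regular cyclic group of order `n`:
`I_n(x) = (1/n) * ∑_{r | n} φ(r) * x(r)^(n/r)`. -/
def cycleIndex (n : ℕ) (x : ℕ → ℚ) : ℚ :=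
  (1 / (n : ℚ)) * ∑ r ∈ n.divisors, (Nat.totient r : ℚ) * x r ^ (n / r)

/-- A divisor sum over `2 * m` of a function vanishing at odd divisors only sees the doubles of the
divisors of `m`. -/
theorem sum_divisors_two_mul_of_odd_eq_zero {M : Type*} [AddCommMonoid M] {m : ℕ} (hm : 0 < m)
    (f : ℕ → M) (hf : ∀ r ∈ (2 * m).divisors, Odd r → f r = 0) :
    ∑ r ∈ (2 * m).divisors, f r = ∑ s ∈ m.divisors, f (2 * s) := by
  symm
  apply Finset.sum_of_injOn (fun s => 2 * s)
  · intro a _ b _ hab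
    simpa using hab
  · intro s hs
    have hs' : s ∣ m := Nat.dvd_of_mem_divisors hs
    simpa [hm.ne'] using Nat.mul_dvd_mul_left 2 hs'
  · intro r hr hr'
    rcases Nat.even_or_odd' r with ⟨s, rfl | rfl⟩
    · refine absurd ⟨s, ?_, rfl⟩ hr'
      have hs : 2 * s ∣ 2 * m := Nat.dvd_of_mem_divisors hr
      simpa [hm.ne'] using Nat.dvd_of_mul_dvd_mul_left two_pos hs
    · exact hf _ hr ⟨s, rfl⟩
  · intro s _
    rfl

/-- A divisor sum over `2 * m` of a function vanishing at even divisors only sees the divisors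
of `m`. -/
theorem sum_divisors_two_mul_of_even_eq_zero {M : Type*} [AddCommMonoid M] {m : ℕ} (hm : 0 < m)
    (f : ℕ → M) (hf : ∀ r ∈ (2 * m).divisors, Even r → f r = 0) :
    ∑ r ∈ (2 * m).divisors, f r = ∑ r ∈ m.divisors, f r := by
  symm
  apply Finset.sum_subset (Nat.divisors_subset_of_dvd (by lia) (Nat.dvd_mul_left m 2))
  intro r hr hr'
  refine hf r hr (Nat.not_odd_iff_even.mp fun hodd => hr' ?_)
  rw [Nat.mem_divisors, and_iff_left hm.ne']
  exact hodd.coprime_two_right.dvd_of_dvd_mul_left (Nat.dvd_of_mem_divisors hr)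

/-- If `u(r)² = x(r)` for odd positive `r`, then `I_{2m}(y) = I_{2m}(v) + I_m(w)`
where `y(r) = 0` for odd `r`, `y(r) = x(r/2)` for even `r`; `v(r) = u(r)` for
odd `r`, `v(r) = 0` for even `r`; `w(r) = 0` for odd `r`, `w(r) = x(r)` for even `r`. -/
theorem cycleIndex_two_mul_split (m : ℕ) (hm : 0 < m) (x u : ℕ → ℚ)
    (h : ∀ r : ℕ, 0 < r → Odd r → u r ^ 2 = x r) :
    cycleIndex (2 * m) (fun r => if Odd r then 0 else x (r / 2)) =
      cycleIndex (2 * m) (fun r => if Odd r then u r else 0) +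
        cycleIndex m (fun r => if Odd r then 0 else x r) := by
  have exponent_ne_zero {n r : ℕ} (hr : r ∈ n.divisors) : n / r ≠ 0 :=
    (Nat.div_pos (Nat.divisor_le hr) (Nat.pos_of_mem_divisors hr)).ne'
  unfold cycleIndex
  rw [sum_divisors_two_mul_of_odd_eq_zero hm, sum_divisors_two_mul_of_even_eq_zero hm,
    Finset.mul_sum, Finset.mul_sum, Finset.mul_sum, ← Finset.sum_add_distrib]
  · refine Finset.sum_congr rfl fun s hs => ?_
    have hm0 : (m : ℚ) ≠ 0 := by exact_mod_cast hm.ne'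
    have hdiv : 2 * m / (2 * s) = m / s := Nat.mul_div_mul_left m s two_pos
    have hne := exponent_ne_zero hs
    have hnot : ¬ Odd (2 * s) := by simp
    rcases Nat.even_or_odd s with hs2 | hs2
    · have hodd : ¬ Odd s := Nat.not_odd_iff_even.mpr hs2
      have hne' : 2 * m / s ≠ 0 := by
        rw [Nat.mul_div_assoc 2 (Nat.dvd_of_mem_divisors hs)]
        lia
      simp only [hnot, hodd, if_false, hdiv, zero_pow hne', Nat.totient_two_mul_of_even hs2,
        Nat.mul_div_cancel_left s two_pos]
      push_cast
      field_simp
      ring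
    · have hu : u s ^ (2 * m / s) = x s ^ (m / s) := by
        rw [Nat.mul_div_assoc 2 (Nat.dvd_of_mem_divisors hs), pow_mul,
          h s (Nat.pos_of_mem_divisors hs) hs2]
      simp only [hnot, hs2, if_false, if_true, hdiv, zero_pow hne, hu,
        Nat.totient_two_mul_of_odd hs2, Nat.mul_div_cancel_left s two_pos]
      ring
  · intro r hr heven
    simp [Nat.not_odd_iff_even.mpr heven, zero_pow (exponent_ne_zero hr)]
  · intro r hr hodd
    simp [hodd, zero_pow (exponent_ne_zero hr)]
end

section
/- Let p > 3 be a prime such that q = (p+1)/2 is also prime, and let p̃ denote the maximal odd divisor of p − 1. Then 4·C_u(p) = C_u(p+1) + 2·C̄_u(2p̃+1). -/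
open Finset

/-- Number of undirected circulant graphs of odd prime order `p`:
`C_u(p) = (2/(p-1))·∑_{r | (p-1)/2} φ(r)·2^{(p-1)/(2r)}`. -/
def Cu (p : ℕ) : ℚ :=
  (2 / ((p : ℚ) - 1)) *
    ∑ r ∈ ((p - 1) / 2).divisors,
      (Nat.totient r : ℚ) * (2 : ℚ) ^ ((p - 1) / (2 * r))

/-- Number of undirected circulant graphs of order `2q`, `q` an odd prime:
`C_u(2q) = 2·(2/(q-1))·∑_{r | (q-1)/2} φ(r)·4^{(q-1)/(2r)}`. -/
def CuTwice (q : ℕ) : ℚ :=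
  2 * ((2 / ((q : ℚ) - 1)) *
    ∑ r ∈ ((q - 1) / 2).divisors,
      (Nat.totient r : ℚ) * (4 : ℚ) ^ ((q - 1) / (2 * r)))

/-- For odd `p̃`, `C̄_u(2p̃+1) = (1/p̃)·∑_{r | p̃} φ(r)·2^{p̃/r}`
(the formula counting undirected circulants of order `2p̃+1` when that is prime). -/
def CuBar (pt : ℕ) : ℚ :=
  (1 / (pt : ℚ)) * ∑ r ∈ pt.divisors, (Nat.totient r : ℚ) * (2 : ℚ) ^ (pt / r)

/-- The divisors of `2 ^ (a + 1) * t`, `t` odd, that do not divide `2 ^ a * t` are the products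
`2 ^ (a + 1) * s` with `s ∣ t`. -/
lemma sum_divisors_two_pow_succ_mul {M : Type*} [AddCommMonoid M] (a : ℕ) {t : ℕ} (ht : Odd t)
    (f : ℕ → M) :
    ∑ r ∈ (2 ^ (a + 1) * t).divisors, f r =
      ∑ r ∈ (2 ^ a * t).divisors, f r + ∑ s ∈ t.divisors, f (2 ^ (a + 1) * s) := by
  have ht0 : t ≠ 0 := ht.pos.ne'
  have hinj : Function.Injective fun s : ℕ => 2 ^ (a + 1) * s :=
    fun x y h => Nat.eq_of_mul_eq_mul_left (by positivity) h
  have hdisj : Disjoint (2 ^ a * t).divisors (t.divisors.image fun s => 2 ^ (a + 1) * s) := by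
    rw [Finset.disjoint_right]
    intro r hr hr'
    obtain ⟨s, -, rfl⟩ := Finset.mem_image.mp hr
    have h : 2 ^ a * 2 ∣ 2 ^ a * t :=
      (Dvd.intro s (by ring)).trans (Nat.dvd_of_mem_divisors hr')
    exact ht.not_two_dvd_nat (Nat.dvd_of_mul_dvd_mul_left (by positivity) h)
  have hunion : (2 ^ (a + 1) * t).divisors =
      (2 ^ a * t).divisors ∪ t.divisors.image fun s => 2 ^ (a + 1) * s := by
    ext r
    simp only [Finset.mem_union, Finset.mem_image, Nat.mem_divisors]
    constructor
    · rintro ⟨hr, -⟩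
      obtain ⟨x, s, hx, hs, rfl⟩ := (Nat.dvd_mul).mp hr
      obtain ⟨j, hj, rfl⟩ := (Nat.dvd_prime_pow Nat.prime_two).mp hx
      rcases hj.lt_or_eq with hj | rfl
      · exact Or.inl ⟨mul_dvd_mul (pow_dvd_pow 2 (by omega)) hs, by positivity⟩
      · exact Or.inr ⟨s, ⟨hs, ht0⟩, rfl⟩
    · rintro (⟨hr, -⟩ | ⟨s, ⟨hs, -⟩, rfl⟩)
      · exact ⟨hr.trans (mul_dvd_mul_right (pow_dvd_pow 2 (by omega)) t), by positivity⟩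
      · exact ⟨mul_dvd_mul_left _ hs, by positivity⟩
  rw [hunion, Finset.sum_union hdisj, Finset.sum_image hinj.injOn]

/-- If `p > 3` and `q = (p+1)/2` are both prime and `p̃` is the maximal odd
divisor of `p - 1` (i.e. `p - 1 = 2^k·p̃` with `p̃` odd), then
`4·C_u(p) = C_u(p+1) + 2·C̄_u(2p̃+1)`. -/
theorem four_mul_Cu (p q k pt : ℕ) (hp : p.Prime) (hp3 : 3 < p)
    (hq : q.Prime) (hpq : p + 1 = 2 * q) (hpt : Odd pt)
    (hfac : p - 1 = 2 ^ k * pt) :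
    4 * Cu p = CuTwice q + 2 * CuBar pt := by
  obtain ⟨c, hc⟩ := hq.odd_of_ne_two (by omega)
  obtain ⟨d, hd⟩ := hpt
  obtain ⟨a, rfl⟩ : ∃ a, k = a + 2 := by
    match k with
    | 0 => omega
    | 1 => omega
    | a + 2 => exact ⟨a, rfl⟩
  have hpt : Odd pt := ⟨d, hd⟩
  have hpt0 : (pt : ℚ) ≠ 0 := by exact_mod_cast hpt.pos.ne'
  have hp1 : p - 1 = 2 * (2 ^ (a + 1) * pt) := by rw [hfac]; ring
  have hq1 : q - 1 = 2 * (2 ^ a * pt) := by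
    have : p - 1 = 2 * (2 * (2 ^ a * pt)) := by rw [hfac]; ring
    omega
  have hpQ : (p : ℚ) - 1 = 2 * (2 ^ (a + 1) * pt) := by
    rw [← Nat.cast_pred hp.pos, hp1]; push_cast; ring
  have hqQ : (q : ℚ) - 1 = 2 * (2 ^ a * pt) := by
    rw [← Nat.cast_pred hq.pos, hq1]; push_cast; ring
  have hold : ∑ r ∈ (2 ^ a * pt).divisors,
      (Nat.totient r : ℚ) * (2 : ℚ) ^ (2 ^ (a + 1) * pt / r) =
      ∑ r ∈ (2 ^ a * pt).divisors, (Nat.totient r : ℚ) * (4 : ℚ) ^ (2 ^ a * pt / r) := by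
    refine Finset.sum_congr rfl fun r hr => ?_
    rw [pow_succ' 2 a, mul_assoc, Nat.mul_div_assoc _ (Nat.dvd_of_mem_divisors hr), pow_mul]
    norm_num
  have hnew : ∑ s ∈ pt.divisors, (Nat.totient (2 ^ (a + 1) * s) : ℚ) *
      (2 : ℚ) ^ (2 ^ (a + 1) * pt / (2 ^ (a + 1) * s)) =
      2 ^ a * ∑ s ∈ pt.divisors, (Nat.totient s : ℚ) * (2 : ℚ) ^ (pt / s) := by
    rw [Finset.mul_sum]
    refine Finset.sum_congr rfl fun s hs => ?_
    have hcop : Nat.Coprime (2 ^ (a + 1)) s :=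
      (Nat.coprime_two_left.mpr (hpt.of_dvd_nat (Nat.dvd_of_mem_divisors hs))).pow_left _
    rw [Nat.mul_div_mul_left _ _ (by positivity), Nat.totient_mul hcop,
      Nat.totient_prime_pow_succ Nat.prime_two]
    push_cast
    ring
  unfold Cu CuTwice CuBar
  simp only [hp1, hq1, hpQ, hqQ, Nat.mul_div_mul_left _ _ two_pos,
    Nat.mul_div_cancel_left _ two_pos]
  rw [sum_divisors_two_pow_succ_mul a hpt, hold, hnew]
  field_simp
  ring
end

section
/- For every odd prime p, C_sd(p²) − C_su(p²) − C_t(p²) = C_sd(p)² − C_su(p)² − C_t(p)²; that is, the number of mixed self-complementary directed circulant graphs of order p² equals the corresponding difference of squares of the counts for order p. -/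
open Finset

/-- `A(a) = (1/(p-1))·∑_{r | p-1, r even} φ(r)·a^{(p-1)/r}`. -/
def A (p : ℕ) (a : ℚ) : ℚ :=
  (1 / ((p : ℚ) - 1)) *
    ∑ r ∈ (p - 1).divisors.filter (fun r => Even r),
      (Nat.totient r : ℚ) * a ^ ((p - 1) / r)

/-- `B(a) = (2/(p-1))·∑_{r | (p-1)/2, r even} φ(r)·a^{(p-1)/(2r)}`. -/
def B (p : ℕ) (a : ℚ) : ℚ :=
  (2 / ((p : ℚ) - 1)) *
    ∑ r ∈ ((p - 1) / 2).divisors.filter (fun r => Even r),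
      (Nat.totient r : ℚ) * a ^ ((p - 1) / (2 * r))

/-- `T(a) = (1/(p-1))·∑_{r | p-1, r odd} φ(r)·a^{(p-1)/(2r)}`. -/
def T (p : ℕ) (a : ℚ) : ℚ :=
  (1 / ((p : ℚ) - 1)) *
    ∑ r ∈ (p - 1).divisors.filter (fun r => Odd r),
      (Nat.totient r : ℚ) * a ^ ((p - 1) / (2 * r))

/-- Number of self-complementary directed circulant graphs of order `p²`. -/
def CsdSq (p : ℕ) : ℚ :=
  (1 / (p : ℚ)) * (A p ((2 : ℚ) ^ (p + 1)) - A p 4) + (A p 2) ^ 2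

/-- Number of self-complementary undirected circulant graphs of order `p²`. -/
def CsuSq (p : ℕ) : ℚ :=
  (1 / (p : ℚ)) * (B p ((2 : ℚ) ^ (p + 1)) - B p 4) + (B p 2) ^ 2

/-- Number of circulant tournaments of order `p²`. -/
def CtSq (p : ℕ) : ℚ :=
  (1 / (p : ℚ)) * (T p ((2 : ℚ) ^ (p + 1)) - T p 4) + (T p 2) ^ 2

/-- Doubling is a bijection from the divisors of `m` to the even divisors of `2 * m`. -/
lemma sum_even_divisors_two_mul {M : Type*} [AddCommMonoid M] {m : ℕ} (hm : m ≠ 0) (f : ℕ → M) :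
    ∑ r ∈ (2 * m).divisors.filter (fun r => Even r), f r = ∑ s ∈ m.divisors, f (2 * s) := by
  symm
  refine Finset.sum_bij (fun s _ => 2 * s) ?_ ?_ ?_ ?_
  · intro s hs
    simp only [Finset.mem_filter, Nat.mem_divisors] at hs ⊢
    exact ⟨⟨Nat.mul_dvd_mul_left 2 hs.1, by omega⟩, even_two_mul s⟩
  · intro s _ t _ h
    simpa using h
  · intro r hr
    simp only [Finset.mem_filter, Nat.mem_divisors] at hr
    obtain ⟨s, rfl⟩ := hr.2.two_dvd
    exact ⟨s, Nat.mem_divisors.2 ⟨Nat.dvd_of_mul_dvd_mul_left two_pos hr.1.1, hm⟩, rfl⟩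
  · intro s _
    rfl

lemma filter_odd_divisors_two_mul (m : ℕ) :
    (2 * m).divisors.filter (fun r => Odd r) = m.divisors.filter (fun r => Odd r) := by
  ext r
  simp only [Finset.mem_filter, Nat.mem_divisors]
  constructor
  · rintro ⟨⟨h, h0⟩, hr⟩
    exact ⟨⟨hr.coprime_two_right.dvd_of_dvd_mul_left h, by omega⟩, hr⟩
  · rintro ⟨⟨h, h0⟩, hr⟩
    exact ⟨⟨h.mul_left 2, by omega⟩, hr⟩

/-- For odd `p > 1`, the generating expression `A` splits as `B + T`. -/
lemma A_eq_B_add_T {p : ℕ} (hp : 1 < p) (hodd : Odd p) (a : ℚ) : A p a = B p a + T p a := by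
  obtain ⟨m, rfl⟩ := hodd
  have hm : m ≠ 0 := by omega
  have hsplit : ∑ s ∈ m.divisors, ((2 * s).totient : ℚ) * a ^ (2 * m / (2 * s)) =
      2 * ∑ s ∈ m.divisors.filter (fun s => Even s), (s.totient : ℚ) * a ^ (2 * m / (2 * s)) +
      ∑ s ∈ m.divisors.filter (fun s => Odd s), (s.totient : ℚ) * a ^ (2 * m / (2 * s)) := by
    rw [← Finset.sum_filter_add_sum_filter_not m.divisors (fun s => Even s), Finset.mul_sum]
    simp only [Nat.not_even_iff_odd]
    congr 1
    · refine Finset.sum_congr rfl fun s hs => ?_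
      rw [Nat.totient_mul_of_prime_of_dvd Nat.prime_two (Finset.mem_filter.1 hs).2.two_dvd]
      push_cast
      ring
    · refine Finset.sum_congr rfl fun s hs => ?_
      rw [Nat.totient_two_mul_of_odd (Finset.mem_filter.1 hs).2]
  simp only [A, B, T, Nat.add_sub_cancel, Nat.mul_div_cancel_left m two_pos]
  rw [sum_even_divisors_two_mul hm, filter_odd_divisors_two_mul, hsplit]
  ring

/-- For every odd prime `p`,
`C_sd(p²) − C_su(p²) − C_t(p²) = C_sd(p)² − C_su(p)² − C_t(p)²`,
where `C_sd(p) = A(2)`, `C_su(p) = B(2)`, `C_t(p) = T(2)`. -/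
theorem mixed_sq_identity (p : ℕ) (hp : p.Prime) (hodd : Odd p) :
    CsdSq p - CsuSq p - CtSq p = (A p 2) ^ 2 - (B p 2) ^ 2 - (T p 2) ^ 2 := by
  simp only [CsdSq, CsuSq, CtSq, A_eq_B_add_T hp.one_lt hodd]
  ring
end
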